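/- Fix integers m, n ≥ 1, an even integer δ ≥ 2, and D ∈ (0, 1/2] with D·n a natural number. Let C_b ⊆ (ZMod 2)^m be a linear subspace, let x(·) denote the random encoding of the degree-δ LDGM ensemble with m inputs and blocklength n, and let S be uniformly distributed on (ZMod 2)^n, independent of the ensemble. Then Σ_{z ∈ C_b, z ≠ 0} P(hammingDist(x(z), S) ≤ D·n ∣ wt(S) ≤ D·n) ≤ #{z ∈ C_b \ {0} : wt(z)/m < u(D;δ) or wt(z)/m > 1 − u(D;δ)} + Σ_{z ∈ C_b \ {0}, u(D;δ) ≤ wt(z)/m ≤ 1 − u(D;δ)} 2^{−n·D₂(D‖β(wt(z)/m; δ))}. -/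

import Mathlib

/-!
Fix `z` and write `β = ldgmBeta (wt z / m) δ`. The bits of the random codeword of `z` are
i.i.d. Bernoulli(`β`): the character sum `∑ a, (-1) ^ (∑ i, z (a i))` over index tuples factors as
`(m - 2 wt z) ^ δ`. As `δ` is even, `β ≤ 1/2`, so for each fixed word `s` and each `0 < t ≤ 1`
flipping a bit can only decrease its generating function, and
`E[t ^ d(x(z), s)] ≤ (1 - β (1 - t)) ^ n` whatever `s` is (`sum_pow_dist_le`). Markov's
inequality at `t = D (1 - β) / (β (1 - D))`, which is at most `1` exactly when `D ≤ β`, gives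
`P(d(x(z), s) ≤ D n) ≤ 2 ^ (-n D₂(D‖β))` (`chernoff_value`, `card_close_le`). This is uniform
in `s`, so it survives conditioning on any event about `S` (`unifCondP_le`). Finally,
`u ≤ wt z / m ≤ 1 - u` forces `D ≤ β` (`D_le_ldgmBeta`); the remaining `z` are bounded by `1`.
-/

open Finset
open scoped BigOperators Classical

noncomputable section

/-- `ldgmBeta w δ = (1 - (1-2w)^δ)/2`: the Bernoulli parameter induced by an
input of relative weight `w` in the degree-`δ` LDGM ensemble. -/
def ldgmBeta (w : ℝ) (δ : ℕ) : ℝ := (1 - (1 - 2 * w) ^ δ) / 2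

/-- `ldgmU D δ = (1 - (1-2D)^(1/δ))/2`. -/
def ldgmU (D : ℝ) (δ : ℕ) : ℝ := (1 - (1 - 2 * D) ^ ((1 : ℝ) / δ)) / 2

/-- Binary entropy function (in bits). -/
def binEnt (x : ℝ) : ℝ := -(x * Real.logb 2 x) - (1 - x) * Real.logb 2 (1 - x)

/-- Binary Kullback–Leibler divergence (in bits). -/
def klBin (a p : ℝ) : ℝ := a * Real.logb 2 (a / p) + (1 - a) * Real.logb 2 ((1 - a) / (1 - p))

/-- Probability of the event `E` under the uniform distribution on the finite type `Ω`. -/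
def unifP (Ω : Type*) [Fintype Ω] (E : Ω → Prop) : ℝ :=
  ((Finset.univ.filter E).card : ℝ) / (Fintype.card Ω : ℝ)

/-- Conditional probability of `E` given `F` under the uniform distribution on `Ω`. -/
def unifCondP (Ω : Type*) [Fintype Ω] (E F : Ω → Prop) : ℝ :=
  unifP Ω (fun ω => E ω ∧ F ω) / unifP Ω F

/-- Expectation of `f` under the uniform distribution on the finite type `Ω`. -/
def unifE (Ω : Type*) [Fintype Ω] (f : Ω → ℝ) : ℝ :=
  (∑ ω : Ω, f ω) / (Fintype.card Ω : ℝ)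

/-- The encoding map of the degree-`δ` LDGM ensemble with `m` inputs and blocklength `n`:
given the random index choices `I`, the `j`-th codeword bit of `z` is
`z (I j 1) + ⋯ + z (I j δ)` (mod 2). -/
def ldgmEnc {m n δ : ℕ} (I : Fin n → Fin δ → Fin m) (z : Fin m → ZMod 2) :
    Fin n → ZMod 2 := fun j => ∑ i : Fin δ, z (I j i)

/-- The nontrivial real character `x ↦ (-1) ^ x` of `ZMod 2`. -/
def signChar (x : ZMod 2) : ℝ := if x = 0 then 1 else -1

lemma zmod_two_cases (x : ZMod 2) : x = 0 ∨ x = 1 := by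
  revert x; decide

lemma signChar_add (x y : ZMod 2) : signChar (x + y) = signChar x * signChar y := by
  have h : (1 : ZMod 2) + 1 = 0 := by decide
  rcases zmod_two_cases x with rfl | rfl <;> rcases zmod_two_cases y with rfl | rfl <;>
    simp [signChar, h]

lemma signChar_sum {ι : Type*} (s : Finset ι) (f : ι → ZMod 2) :
    signChar (∑ i ∈ s, f i) = ∏ i ∈ s, signChar (f i) := by
  classical
  induction s using Finset.induction_on with
  | empty => simp [signChar]
  | insert a s ha ih => rw [Finset.sum_insert ha, Finset.prod_insert ha, signChar_add, ih]

lemma sum_signChar {m : ℕ} (z : Fin m → ZMod 2) :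
    ∑ i, signChar (z i) = (m : ℝ) - 2 * hammingNorm z := by
  have h : ∀ i, signChar (z i) = 1 - 2 * (if z i ≠ 0 then (1 : ℝ) else 0) := by
    intro i
    by_cases hz : z i = 0 <;> simp [signChar, hz]
    norm_num
  simp_rw [h]
  rw [Finset.sum_sub_distrib, ← Finset.mul_sum, Finset.sum_boole]
  simp [hammingNorm]

lemma sum_signChar_tuple {m : ℕ} (δ : ℕ) (z : Fin m → ZMod 2) :
    ∑ a : Fin δ → Fin m, signChar (∑ i, z (a i)) = ((m : ℝ) - 2 * hammingNorm z) ^ δ := by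
  simp_rw [signChar_sum]
  rw [← sum_signChar, Finset.sum_pow']
  simp

/-- The one-bit generating function, against an arbitrary target bit `s`, is largest for `s = 0`. -/
lemma sum_bit_le {m δ : ℕ} (hm : 1 ≤ m) (hδ : Even δ) (z : Fin m → ZMod 2) (s : ZMod 2)
    {t : ℝ} (ht : t ≤ 1) :
    ∑ a : Fin δ → Fin m, (if (∑ i, z (a i)) ≠ s then t else 1) ≤
      (m : ℝ) ^ δ * (1 - ldgmBeta ((hammingNorm z : ℝ) / m) δ * (1 - t)) := by
  have h : ∀ x : ZMod 2, (if x ≠ s then t else 1) =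
      (1 + t) / 2 + signChar x * (signChar s * ((1 - t) / 2)) := by
    intro x
    rcases zmod_two_cases x with rfl | rfl <;> rcases zmod_two_cases s with rfl | rfl <;>
      simp [signChar] <;> ring
  have hs : signChar s ≤ 1 := by
    unfold signChar; split_ifs <;> norm_num
  have hm' : (m : ℝ) ≠ 0 := by positivity
  have hp : (0 : ℝ) ≤ ((m : ℝ) - 2 * hammingNorm z) ^ δ := hδ.pow_nonneg _
  have hq : (m : ℝ) ^ δ * (1 - 2 * ((hammingNorm z : ℝ) / m)) ^ δ =
      ((m : ℝ) - 2 * hammingNorm z) ^ δ := by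
    rw [← mul_pow]; congr 1; field_simp
  simp_rw [h]
  rw [Finset.sum_add_distrib, ← Finset.sum_mul, sum_signChar_tuple]
  have hr : (m : ℝ) ^ δ * (1 - ldgmBeta ((hammingNorm z : ℝ) / m) δ * (1 - t)) =
      (m : ℝ) ^ δ * ((1 + t) / 2) + ((m : ℝ) - 2 * hammingNorm z) ^ δ * ((1 - t) / 2) := by
    rw [← hq, ldgmBeta]; ring
  rw [hr]
  have : signChar s * ((1 - t) / 2) ≤ (1 - t) / 2 :=
    mul_le_of_le_one_left (by linarith) hs
  have := mul_le_mul_of_nonneg_left this hp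
  simp
  linarith

lemma pow_hammingDist {n : ℕ} (x y : Fin n → ZMod 2) (t : ℝ) :
    t ^ hammingDist x y = ∏ j, (if x j ≠ y j then t else 1) := by
  rw [Finset.prod_ite, Finset.prod_const, Finset.prod_const_one, mul_one]
  rfl

/-- Unnormalized bound on the generating function of the distance to a fixed word `s`. -/
lemma sum_pow_dist_le {m n δ : ℕ} (hm : 1 ≤ m) (hδ : Even δ) (z : Fin m → ZMod 2)
    (s : Fin n → ZMod 2) {t : ℝ} (ht0 : 0 ≤ t) (ht : t ≤ 1) :
    ∑ I : Fin n → Fin δ → Fin m, t ^ hammingDist (ldgmEnc I z) s ≤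
      ((m : ℝ) ^ δ * (1 - ldgmBeta ((hammingNorm z : ℝ) / m) δ * (1 - t))) ^ n := by
  simp_rw [pow_hammingDist]
  have h := Finset.prod_univ_sum (fun _ : Fin n => (Finset.univ : Finset (Fin δ → Fin m)))
    (fun j a => if (∑ i, z (a i)) ≠ s j then t else (1 : ℝ))
  rw [Fintype.piFinset_univ] at h
  refine le_of_eq_of_le h.symm ?_
  calc _ ≤ ∏ _j : Fin n,
        ((m : ℝ) ^ δ * (1 - ldgmBeta ((hammingNorm z : ℝ) / m) δ * (1 - t))) := by
        refine Finset.prod_le_prod (fun j _ => Finset.sum_nonneg fun a _ => ?_)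
          (fun j _ => sum_bit_le hm hδ z (s j) ht)
        split_ifs <;> linarith
    _ = _ := by simp

/-- The Chernoff bound at its optimal parameter is the Kullback–Leibler exponent. -/
lemma chernoff_value {D b : ℝ} (n : ℕ) (hD0 : 0 < D) (hD1 : D < 1) (hb0 : 0 < b) (hb1 : b < 1) :
    (1 - b * (1 - D * (1 - b) / (b * (1 - D)))) ^ n /
      (D * (1 - b) / (b * (1 - D))) ^ (D * n) = (2 : ℝ) ^ (-(n : ℝ) * klBin D b) := by
  have h1 : 0 < 1 - D := by linarith
  have h2 : 0 < 1 - b := by linarith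
  have he : 1 - b * (1 - D * (1 - b) / (b * (1 - D))) = (1 - b) / (1 - D) := by
    field_simp; ring
  have ht : 0 < D * (1 - b) / (b * (1 - D)) := by positivity
  rw [he]
  have hL : 0 < ((1 - b) / (1 - D)) ^ n / (D * (1 - b) / (b * (1 - D))) ^ (D * n) := by positivity
  have hl2 : Real.log 2 ≠ 0 := (Real.log_pos (by norm_num)).ne'
  refine Real.log_injOn_pos hL (Set.mem_Ioi.2 (by positivity)) ?_
  rw [Real.log_div (by positivity) (by positivity), Real.log_pow, Real.log_rpow ht,
    Real.log_rpow (by norm_num), klBin, Real.logb, Real.logb,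
    Real.log_div h2.ne' h1.ne', Real.log_div (by positivity) (by positivity),
    Real.log_mul hD0.ne' h2.ne', Real.log_mul hb0.ne' h1.ne',
    Real.log_div hD0.ne' hb0.ne', Real.log_div h1.ne' h2.ne']
  field_simp
  ring

lemma ldgmBeta_le_half {δ : ℕ} (hδ : Even δ) (w : ℝ) : ldgmBeta w δ ≤ 1 / 2 := by
  have := hδ.pow_nonneg (1 - 2 * w)
  unfold ldgmBeta; linarith

lemma D_le_ldgmBeta {δ : ℕ} (hδe : Even δ) (hδ : 2 ≤ δ) {D w : ℝ} (hD : D ≤ 1 / 2)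
    (h1 : ldgmU D δ ≤ w) (h2 : w ≤ 1 - ldgmU D δ) : D ≤ ldgmBeta w δ := by
  unfold ldgmU at h1 h2
  have habs : |1 - 2 * w| ≤ (1 - 2 * D) ^ ((1 : ℝ) / δ) := by
    rw [abs_le]; constructor <;> linarith
  have := pow_le_pow_left₀ (abs_nonneg _) habs δ
  rw [hδe.pow_abs, one_div, Real.rpow_inv_natCast_pow (by linarith) (by omega)] at this
  unfold ldgmBeta; linarith

/-- The Chernoff bound on the lower tail of the distance to a fixed word `s`, as a count of
index choices. -/
lemma card_close_le {m n δ : ℕ} (hm : 1 ≤ m) (hδ : Even δ) {D : ℝ} (hD0 : 0 < D)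
    (hD1 : D ≤ 1 / 2) (z : Fin m → ZMod 2) (hb : D ≤ ldgmBeta ((hammingNorm z : ℝ) / m) δ)
    (s : Fin n → ZMod 2) :
    ((Finset.univ.filter (fun I : Fin n → Fin δ → Fin m =>
      (hammingDist (ldgmEnc I z) s : ℝ) ≤ D * n)).card : ℝ) ≤
      (2 : ℝ) ^ (-(n : ℝ) * klBin D (ldgmBeta ((hammingNorm z : ℝ) / m) δ)) *
        (Fintype.card (Fin n → Fin δ → Fin m) : ℝ) := by
  set b := ldgmBeta ((hammingNorm z : ℝ) / m) δ with hbdef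
  have hb2 : b ≤ 1 / 2 := ldgmBeta_le_half hδ _
  have hb0 : 0 < b := by linarith
  have h1 : 0 < 1 - D := by linarith
  have h2 : 0 < 1 - b := by linarith
  rw [← chernoff_value n hD0 (by linarith) hb0 (by linarith)]
  set t := D * (1 - b) / (b * (1 - D)) with htdef
  have ht0 : 0 < t := by positivity
  have ht1 : t ≤ 1 := by
    rw [htdef, div_le_one (by positivity)]; nlinarith
  have hpos : 0 < t ^ (D * n : ℝ) := by positivity
  have hM := sum_pow_dist_le hm hδ z s ht0.le ht1
  rw [← hbdef, mul_pow] at hM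
  have hcard : (Fintype.card (Fin n → Fin δ → Fin m) : ℝ) = ((m : ℝ) ^ δ) ^ n := by simp
  rw [hcard, div_mul_eq_mul_div, le_div_iff₀ hpos, mul_comm ((1 - b * (1 - t)) ^ n)]
  refine le_trans ?_ hM
  rw [← nsmul_eq_mul, ← Finset.sum_const]
  refine le_trans (Finset.sum_le_sum fun I hI => ?_)
    (Finset.sum_le_sum_of_subset_of_nonneg (Finset.filter_subset _ _) fun I _ _ => by positivity)
  rw [← Real.rpow_natCast]
  exact Real.rpow_le_rpow_of_exponent_ge ht0 ht1 (Finset.mem_filter.1 hI).2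

/-- If every section of `E` over the second factor has probability at most `B`, then so has `E`
conditioned on an event that depends on the second factor only. For an empty condition the
conditional probability is the junk value `0`. -/
lemma unifCondP_le {Ω₁ Ω₂ : Type*} [Fintype Ω₁] [Fintype Ω₂] (E : Ω₁ × Ω₂ → Prop) (F : Ω₂ → Prop)
    {B : ℝ} (hB : 0 ≤ B)
    (h : ∀ s, ((Finset.univ.filter (fun I => E (I, s))).card : ℝ) ≤ B * Fintype.card Ω₁) :
    unifCondP (Ω₁ × Ω₂) E (fun ω => F ω.2) ≤ B := by
  unfold unifCondP unifP
  refine div_le_of_le_mul₀ (by positivity) hB ?_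
  rw [← mul_div_assoc]
  refine div_le_div_of_nonneg_right ?_ (by positivity)
  simp only [← Finset.sum_boole, Fintype.sum_prod_type_right] at h ⊢
  rw [Finset.mul_sum]
  refine Finset.sum_le_sum fun s _ => ?_
  by_cases hF : F s
  · simpa [hF] using h s
  · simp [hF]

/-- A bound on the probability of `x(z)` being close to a fixed word, uniform in that word, also
bounds the conditional probability attached to `z`. -/
lemma unifCondP_ldgm_le {m n δ : ℕ} (D : ℝ) (z : Fin m → ZMod 2) {B : ℝ} (hB : 0 ≤ B)
    (h : ∀ s : Fin n → ZMod 2, ((Finset.univ.filter (fun I : Fin n → Fin δ → Fin m =>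
      (hammingDist (ldgmEnc I z) s : ℝ) ≤ D * n)).card : ℝ) ≤
        B * (Fintype.card (Fin n → Fin δ → Fin m) : ℝ)) :
    unifCondP ((Fin n → Fin δ → Fin m) × (Fin n → ZMod 2))
      (fun ω => (hammingDist (ldgmEnc ω.1 z) ω.2 : ℝ) ≤ D * n)
      (fun ω => (hammingNorm ω.2 : ℝ) ≤ D * n) ≤ B := by
  refine unifCondP_le (fun ω : (Fin n → Fin δ → Fin m) × (Fin n → ZMod 2) =>
    (hammingDist (ldgmEnc ω.1 z) ω.2 : ℝ) ≤ D * n)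
    (fun s : Fin n → ZMod 2 => (hammingNorm s : ℝ) ≤ D * n) hB fun s => ?_
  convert h s

/-- summing the conditional probabilities of STATEMENT 8 over the nonzero
codewords of the bottom code `C_b`, the low-weight (and high-weight) codewords contribute
at most `1` each, and every other codeword `z` contributes at most
`2^{-n·D₂(D‖β(wt(z)/m;δ))}`. -/
theorem sum_conditional_probabilities_bound (m n δ : ℕ) (hm : 1 ≤ m) (hn : 1 ≤ n)
    (hδeven : Even δ) (hδ : 2 ≤ δ)
    (D : ℝ) (hD : D ∈ Set.Ioc (0 : ℝ) (1 / 2)) (hDn : ∃ k : ℕ, (k : ℝ) = D * n)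
    (Cb : Submodule (ZMod 2) (Fin m → ZMod 2)) :
    (∑ z : Fin m → ZMod 2,
        if z ∈ Cb ∧ z ≠ 0 then
          unifCondP ((Fin n → Fin δ → Fin m) × (Fin n → ZMod 2))
            (fun ω => (hammingDist (ldgmEnc ω.1 z) ω.2 : ℝ) ≤ D * n)
            (fun ω => (hammingNorm ω.2 : ℝ) ≤ D * n)
        else 0) ≤
      ((Finset.univ.filter (fun z : Fin m → ZMod 2 => z ∈ Cb ∧ z ≠ 0 ∧
          ((hammingNorm z : ℝ) / m < ldgmU D δ ∨
            1 - ldgmU D δ < (hammingNorm z : ℝ) / m))).card : ℝ) +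
        ∑ z : Fin m → ZMod 2,
          (if z ∈ Cb ∧ z ≠ 0 ∧ ldgmU D δ ≤ (hammingNorm z : ℝ) / m ∧
              (hammingNorm z : ℝ) / m ≤ 1 - ldgmU D δ then
            (2 : ℝ) ^ (-(n : ℝ) * klBin D (ldgmBeta ((hammingNorm z : ℝ) / m) δ))
          else 0) := by
  rw [Finset.card_filter]
  push_cast
  rw [← Finset.sum_add_distrib]
  refine Finset.sum_le_sum fun z _ => ?_
  by_cases hz : z ∈ Cb ∧ z ≠ 0
  · by_cases hw : (hammingNorm z : ℝ) / m < ldgmU D δ ∨ 1 - ldgmU D δ < (hammingNorm z : ℝ) / m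
    · rw [if_pos hz, if_pos ⟨hz.1, hz.2, hw⟩]
      refine le_add_of_le_of_nonneg (unifCondP_ldgm_le D z zero_le_one fun s => ?_) ?_
      · rw [one_mul]
        exact_mod_cast Finset.card_le_univ _
      · split_ifs <;> positivity
    · have hw' := hw
      rw [not_or, not_lt, not_lt] at hw
      rw [if_pos hz, if_neg (fun h => hw' h.2.2), if_pos ⟨hz.1, hz.2, hw⟩]
      refine le_add_of_nonneg_of_le le_rfl
        (unifCondP_ldgm_le D z (by positivity) fun s => ?_)
      exact card_close_le hm hδeven hD.1 hD.2 z (D_le_ldgmBeta hδeven hδ hD.2 hw.1 hw.2) s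
  · rw [if_neg hz, if_neg (fun h => hz ⟨h.1, h.2.1⟩), if_neg (fun h => hz ⟨h.1, h.2.1⟩)]
    simp
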